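/- arXiv:2302.13827 — 2 statements merged into one kernel-verified Lean document; each statement's English description precedes it below -/
import Mathlib

section
/- Let n be a positive natural number, x₀ ∈ ℝⁿ, Δ ∈ ℝⁿ, and define the lattice grid x : ℤⁿ → ℝⁿ by x(i) = x₀ + (Δ₁ i₁, …, Δₙ iₙ). Let F : ℝⁿ → ℝⁿ be linear, p_W : ℝⁿ → ℝ a function, δ ∈ ℝ, and T(j, i) = p_W(F(x(j)) − F(x(i))) · δ. Then for every fixed index m ∈ ℤⁿ and all j, i ∈ ℤⁿ, one has T(j, i) = T(m, m + i − j); that is, every entry of the transition matrix is determined by the single row indexed by m. -/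
/-- Every entry of the transition matrix is determined by a single row:
with the predictive grid transported through the linear dynamics,
T(j,i) = T(m, m + i - j) for any fixed row index m. -/
theorem stmt_2 (n : ℕ) (hn : 0 < n) (x₀ Δ : Fin n → ℝ)
    (x : (Fin n → ℤ) → Fin n → ℝ)
    (hx : ∀ i, x i = fun d => x₀ d + Δ d * (i d : ℝ))
    (F : (Fin n → ℝ) →ₗ[ℝ] (Fin n → ℝ))
    (pW : (Fin n → ℝ) → ℝ) (δ : ℝ)
    (T : (Fin n → ℤ) → (Fin n → ℤ) → ℝ)
    (hT : ∀ j i, T j i = pW (F (x j) - F (x i)) * δ) :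
    ∀ (m j i : Fin n → ℤ), T j i = T m (m + i - j) := by
  intro m j i
  have h : x j - x i = x m - x (m + i - j) := by
    funext d
    simp only [hx, Pi.sub_apply, Pi.add_apply]
    push_cast
    ring
  rw [hT, hT, ← map_sub, ← map_sub, h]
end

section
/- Let N be a positive natural number and let R be the N×N real matrix with entries R(j, k) = sin(j k π / (N + 1)) for 1 ≤ j, k ≤ N. Then R · R = ((N + 1)/2) · I, where I is the N×N identity matrix; consequently R is invertible with R⁻¹ = (2/(N + 1)) · R. -/
open Real

lemma aux_tel (a : ℝ) (n : ℕ) :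
    2 * sin (a / 2) * ∑ i ∈ Finset.range n, cos (((i : ℝ) + 1) * a)
      = sin ((n + 1 / 2) * a) - sin (a / 2) := by
  induction n with
  | zero =>
    simp
    ring_nf
  | succ n ih =>
    rw [Finset.sum_range_succ, mul_add, ih]
    have h1 : (((n + 1 : ℕ) : ℝ) + 1 / 2) * a = ((n : ℝ) + 1) * a + a / 2 := by
      push_cast; ring
    have h2 : ((n : ℝ) + 1 / 2) * a = ((n : ℝ) + 1) * a - a / 2 := by ring
    rw [h1, h2, sin_add, sin_sub]
    ring

lemma aux_sum (N : ℕ) (m : ℤ) (h0 : m ≠ 0) (h1 : |m| < 2 * (N + 1)) :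
    2 * ∑ i ∈ Finset.range N, cos (((i : ℝ) + 1) * (m * π / (N + 1)))
      = - cos (m * π) - 1 := by
  have hN : (N : ℝ) + 1 ≠ 0 := by positivity
  have hs : sin ((m * π / (N + 1)) / 2) ≠ 0 := by
    intro h
    obtain ⟨k, hk⟩ := sin_eq_zero_iff.1 h
    have hp := pi_ne_zero
    field_simp at hk
    have hk' : k * (2 * (N + 1)) = m := by
      have : ((k * (2 * (N + 1)) : ℤ) : ℝ) = m := by push_cast; linarith
      exact_mod_cast this
    exact h0 (Int.eq_zero_of_abs_lt_dvd (Dvd.intro_left k hk') h1)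
  have ht := aux_tel (m * π / (N + 1)) N
  have h2 : ((N : ℝ) + 1 / 2) * (m * π / (N + 1)) = m * π - (m * π / (N + 1)) / 2 := by
    field_simp; ring
  rw [h2, sin_sub, sin_int_mul_pi] at ht
  apply mul_left_cancel₀ hs
  linarith

theorem aux_main (N : ℕ) (j k : Fin N) :
    ∑ i ∈ Finset.range N, sin (((j : ℕ) + 1) * ((i : ℝ) + 1) * π / (N + 1)) *
      sin (((i : ℝ) + 1) * ((k : ℕ) + 1) * π / (N + 1))
    = if j = k then ((N : ℝ) + 1) / 2 else 0 := by
  have hj := j.2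
  have hk := k.2
  have e : ∀ i : ℕ, sin (((j : ℕ) + 1) * ((i : ℝ) + 1) * π / (N + 1)) *
      sin (((i : ℝ) + 1) * ((k : ℕ) + 1) * π / (N + 1))
      = 1 / 2 * cos (((i : ℝ) + 1) * ((((j : ℤ) - (k : ℤ) : ℤ) : ℝ) * π / (N + 1)))
       - 1 / 2 * cos (((i : ℝ) + 1) * ((((j : ℤ) + (k : ℤ) + 2 : ℤ) : ℝ) * π / (N + 1))) := by
    intro i
    have h1 : ((i : ℝ) + 1) * ((((j : ℤ) - (k : ℤ) : ℤ) : ℝ) * π / (N + 1))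
      = ((j : ℕ) + 1) * ((i : ℝ) + 1) * π / (N + 1)
        - ((i : ℝ) + 1) * ((k : ℕ) + 1) * π / (N + 1) := by
      push_cast; ring
    have h2 : ((i : ℝ) + 1) * ((((j : ℤ) + (k : ℤ) + 2 : ℤ) : ℝ) * π / (N + 1))
      = ((j : ℕ) + 1) * ((i : ℝ) + 1) * π / (N + 1)
        + ((i : ℝ) + 1) * ((k : ℕ) + 1) * π / (N + 1) := by
      push_cast; ring
    rw [h1, h2, cos_sub, cos_add]
    ring
  rw [Finset.sum_congr rfl (fun i _ => e i), Finset.sum_sub_distrib, ← Finset.mul_sum,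
    ← Finset.mul_sum]
  have hp := aux_sum N ((j : ℤ) + (k : ℤ) + 2) (by omega) (by rw [abs_lt]; omega)
  have hc : cos ((((j : ℤ) + (k : ℤ) + 2 : ℤ) : ℝ) * π)
      = cos ((((j : ℤ) - (k : ℤ) : ℤ) : ℝ) * π) := by
    rw [← cos_add_int_mul_two_pi ((((j : ℤ) - (k : ℤ) : ℤ) : ℝ) * π) ((k : ℤ) + 1)]
    congr 1
    push_cast; ring
  rw [hc] at hp
  split_ifs with h
  · subst h
    simp only [sub_self, Int.cast_zero, zero_mul, cos_zero, zero_div, mul_zero,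
      Finset.sum_const, Finset.card_range, nsmul_eq_mul] at hp ⊢
    linarith
  · have hne : (j : ℕ) ≠ k := fun h' => h (Fin.ext h')
    have hm := aux_sum N ((j : ℤ) - (k : ℤ)) (by omega) (by rw [abs_lt]; omega)
    linarith

/-- The sine eigenvector matrix R(j,k) = sin(jkπ/(N+1)) satisfies
R·R = ((N+1)/2)·I; hence R is invertible with R⁻¹ = (2/(N+1))·R.
(Indices are 0-based `Fin N`, shifted by one.) -/
theorem stmt_8 (N : ℕ) (hN : 0 < N)
    (R : Matrix (Fin N) (Fin N) ℝ)
    (hR : ∀ j k : Fin N,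
      R j k = Real.sin (((j : ℕ) + 1) * ((k : ℕ) + 1) * π / (N + 1))) :
    R * R = (((N : ℝ) + 1) / 2) • (1 : Matrix (Fin N) (Fin N) ℝ) ∧
      IsUnit R ∧ R⁻¹ = (2 / ((N : ℝ) + 1)) • R := by
  have hN1 : (N : ℝ) + 1 ≠ 0 := by positivity
  have h : R * R = (((N : ℝ) + 1) / 2) • (1 : Matrix (Fin N) (Fin N) ℝ) := by
    ext j k
    rw [Matrix.mul_apply, Matrix.smul_apply, Matrix.one_apply, smul_eq_mul, mul_ite, mul_one,
      mul_zero, ← aux_main N j k, ← Fin.sum_univ_eq_sum_range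
        (fun i : ℕ => sin (((j : ℕ) + 1) * ((i : ℝ) + 1) * π / (N + 1)) *
          sin (((i : ℝ) + 1) * ((k : ℕ) + 1) * π / (N + 1)))]
    exact Finset.sum_congr rfl (fun i _ => by rw [hR, hR])
  have h' : R * ((2 / ((N : ℝ) + 1)) • R) = 1 := by
    rw [Matrix.mul_smul, h, smul_smul]
    rw [show 2 / ((N : ℝ) + 1) * (((N : ℝ) + 1) / 2) = 1 by field_simp, one_smul]
  exact ⟨h, (Matrix.isUnit_iff_isUnit_det R).2 (Matrix.isUnit_det_of_right_inverse h'),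
    Matrix.inv_eq_right_inv h'⟩
end
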